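/- If the position vector of M satisfies Δ^{II} x = λ x on U for some real λ ≠ 0, then the support function satisfies ⟨x, n⟩ = −2/λ at every point of U. -/

import Mathlib

open Matrix

noncomputable section

/-- The parameter domain `ℝ²`. -/
abbrev Param : Type := Fin 2 → ℝ

/-- Vectors in Euclidean 3-space. -/
abbrev Vec3 : Type := Fin 3 → ℝ

/-- Partial derivative of a vector-valued function in the `i`-th coordinate direction. -/
noncomputable def pd (i : Fin 2) (f : Param → Vec3) (u : Param) : Vec3 :=
  fderiv ℝ f u (Pi.single i 1)

/-- Partial derivative of a scalar function in the `i`-th coordinate direction. -/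
noncomputable def pds (i : Fin 2) (f : Param → ℝ) (u : Param) : ℝ :=
  fderiv ℝ f u (Pi.single i 1)

/-- The Euclidean inner product on `ℝ³`. -/
def dot3 (a b : Vec3) : ℝ := ∑ k, a k * b k

/-- The Euclidean norm on `ℝ³`. -/
noncomputable def norm3 (a : Vec3) : ℝ := Real.sqrt (dot3 a a)

/-- The Gauss map `n = (x_{/1} × x_{/2}) / ‖x_{/1} × x_{/2}‖`. -/
noncomputable def gaussMap (x : Param → Vec3) (u : Param) : Vec3 :=
  (norm3 (crossProduct (pd 0 x u) (pd 1 x u)))⁻¹ • crossProduct (pd 0 x u) (pd 1 x u)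

/-- Components `g_{ij}` of the first fundamental form. -/
noncomputable def fformI (x : Param → Vec3) (u : Param) : Matrix (Fin 2) (Fin 2) ℝ :=
  Matrix.of fun i j => dot3 (pd i x u) (pd j x u)

/-- Components `b_{ij} = ⟨∂²x/∂u^i∂u^j, n⟩` of the second fundamental form. -/
noncomputable def fformII (x : Param → Vec3) (u : Param) : Matrix (Fin 2) (Fin 2) ℝ :=
  Matrix.of fun i j => dot3 (pd i (pd j x) u) (gaussMap x u)

/-- Components `e_{ij} = ⟨n_{/i}, n_{/j}⟩` of the third fundamental form. -/
noncomputable def fformIII (x : Param → Vec3) (u : Param) : Matrix (Fin 2) (Fin 2) ℝ :=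
  Matrix.of fun i j => dot3 (pd i (gaussMap x) u) (pd j (gaussMap x) u)

/-- The Gauss curvature `K = det(b_{ij}) / det(g_{ij})`. -/
noncomputable def gaussCurv (x : Param → Vec3) (u : Param) : ℝ :=
  (fformII x u).det / (fformI x u).det

/-- The mean curvature `H = (1/2) g^{ij} b_{ij}`. -/
noncomputable def meanCurv (x : Param → Vec3) (u : Param) : ℝ :=
  (1 / 2) * ∑ i, ∑ j, (fformI x u)⁻¹ i j * fformII x u i j

/-- First Beltrami operator `∇^J(φ, ψ) = a^{ij} φ_{/i} ψ_{/j}` with respect to the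
fundamental form with component matrix `a`, for scalar `φ` and `ℝ³`-valued `ψ`. -/
noncomputable def beltrami1 (a : Param → Matrix (Fin 2) (Fin 2) ℝ)
    (φ : Param → ℝ) (ψ : Param → Vec3) (u : Param) : Vec3 :=
  ∑ i, ∑ j, ((a u)⁻¹ i j * pds i φ u) • pd j ψ u

/-- Second Beltrami operator
`Δ^J f = −(1/√|det a|) ∂_i (√|det a| a^{ij} ∂_j f)` with respect to the fundamental
form with component matrix `a`, acting componentwise on `ℝ³`-valued functions. -/
noncomputable def beltrami2 (a : Param → Matrix (Fin 2) (Fin 2) ℝ)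
    (f : Param → Vec3) (u : Param) : Vec3 :=
  -((Real.sqrt |(a u).det|)⁻¹ •
    ∑ i, ∑ j, pd i (fun v => (Real.sqrt |(a v).det| * (a v)⁻¹ i j) • pd j f v) u)

/-- `x` is an immersion on `U`: the partial derivatives are linearly independent. -/
def Immersed (x : Param → Vec3) (U : Set Param) : Prop :=
  ∀ u ∈ U, LinearIndependent ℝ ![pd 0 x u, pd 1 x u]

/-- `f` is nonconstant on `U`. -/
def NonconstOn (f : Param → Vec3) (U : Set Param) : Prop :=
  ¬ ∃ v : Vec3, ∀ u ∈ U, f u = v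

/-!
Take the inner product of `Δ^{II} x` with the normal `n`. Every term of the Leibniz expansion that
differentiates a coefficient `√|det b| b^{ij}` is a multiple of some tangent vector `x_{/j}` and
drops out, leaving `⟨Δ^{II} x, n⟩ = -b^{ij} b_{ij} = -tr (b⁻¹ b) = -2`. The eigenvalue equation
turns the left-hand side into `λ ⟨x, n⟩`.
-/

section Calculus

variable {𝕜 E : Type*} [NontriviallyNormedField 𝕜] [NormedAddCommGroup E] [NormedSpace 𝕜 E]
  {u : E}

theorem differentiableAt_bilin_apply₂ [CompleteSpace 𝕜] {F G H : Type*}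
    [NormedAddCommGroup F] [NormedSpace 𝕜 F] [FiniteDimensional 𝕜 F]
    [NormedAddCommGroup G] [NormedSpace 𝕜 G] [FiniteDimensional 𝕜 G]
    [NormedAddCommGroup H] [NormedSpace 𝕜 H]
    (B : F →ₗ[𝕜] G →ₗ[𝕜] H) {f : E → F} {g : E → G}
    (hf : DifferentiableAt 𝕜 f u) (hg : DifferentiableAt 𝕜 g u) :
    DifferentiableAt 𝕜 (fun v => B (f v) (g v)) u :=
  (B.toContinuousBilinearMap.differentiableAt.comp u hf).clm_apply hg

variable {ι : Type*} [Fintype ι] [DecidableEq ι] {A : E → Matrix ι ι 𝕜}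

theorem differentiableAt_matrix_det (hA : ∀ i j, DifferentiableAt 𝕜 (fun v => A v i j) u) :
    DifferentiableAt 𝕜 (fun v => (A v).det) u := by
  simp only [Matrix.det_apply]
  refine .fun_sum fun σ _ => DifferentiableAt.fun_const_smul ?_ _
  exact (HasFDerivAt.finsetProd fun i _ => (hA (σ i) i).hasFDerivAt).differentiableAt

theorem differentiableAt_matrix_adjugate_apply
    (hA : ∀ i j, DifferentiableAt 𝕜 (fun v => A v i j) u) (i j : ι) :
    DifferentiableAt 𝕜 (fun v => (A v).adjugate i j) u := by
  simp only [Matrix.adjugate_apply]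
  refine differentiableAt_matrix_det fun k l => ?_
  by_cases hk : k = j
  · simp [hk]
  · simpa [Matrix.updateRow_ne hk] using hA k l

theorem differentiableAt_matrix_inv_apply
    (hA : ∀ i j, DifferentiableAt 𝕜 (fun v => A v i j) u) (hdet : (A u).det ≠ 0) (i j : ι) :
    DifferentiableAt 𝕜 (fun v => (A v)⁻¹ i j) u := by
  simp only [Matrix.inv_def, Ring.inverse_eq_inv', Matrix.smul_apply, smul_eq_mul]
  exact ((differentiableAt_matrix_det hA).fun_inv hdet).fun_mul
    (differentiableAt_matrix_adjugate_apply hA i j)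

end Calculus

theorem sum_inv_mul_self_of_isSymm {ι K : Type*} [Fintype ι] [DecidableEq ι] [Field K]
    {A : Matrix ι ι K} (hA : A.IsSymm) (hdet : A.det ≠ 0) :
    ∑ i, ∑ j, A⁻¹ i j * A i j = Fintype.card ι :=
  calc ∑ i, ∑ j, A⁻¹ i j * A i j
    _ = (A⁻¹ * Aᵀ).trace := Matrix.sum_hadamard_eq A⁻¹ A
    _ = (1 : Matrix ι ι K).trace := by rw [hA.eq, Matrix.nonsing_inv_mul A hdet.isUnit]
    _ = Fintype.card ι := Matrix.trace_one

theorem dot3_eq_dotProduct (a b : Vec3) : dot3 a b = a ⬝ᵥ b := rfl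

theorem dot3_self_pos {a : Vec3} (ha : a ≠ 0) : 0 < dot3 a a := by
  simpa [dot3_eq_dotProduct] using Matrix.dotProduct_star_self_pos_iff.2 ha

theorem differentiableAt_dot3 {f g : Param → Vec3} {u : Param}
    (hf : DifferentiableAt ℝ f u) (hg : DifferentiableAt ℝ g u) :
    DifferentiableAt ℝ (fun v => dot3 (f v) (g v)) u :=
  differentiableAt_bilin_apply₂ (dotProductBilin ℝ ℝ) hf hg

theorem contDiffAt_pd {f : Param → Vec3} {u : Param} {m n : WithTop ℕ∞}
    (hf : ContDiffAt ℝ n f u) (hmn : m + 1 ≤ n) (i : Fin 2) : ContDiffAt ℝ m (pd i f) u :=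
  (hf.fderiv_right hmn).clm_apply contDiffAt_const

theorem pd_smul {c : Param → ℝ} {f : Param → Vec3} {u : Param} (i : Fin 2)
    (hc : DifferentiableAt ℝ c u) (hf : DifferentiableAt ℝ f u) :
    pd i (fun v => c v • f v) u = c u • pd i f u + pds i c u • f u := by
  simp [pd, pds, fderiv_fun_smul hc hf]

theorem pd_comm {f : Param → Vec3} {u : Param} (hf : ContDiffAt ℝ 2 f u) (i j : Fin 2) :
    pd i (pd j f) u = pd j (pd i f) u := by
  have hf' : DifferentiableAt ℝ (fderiv ℝ f) u :=
    (hf.fderiv_right (m := 1) (by norm_num)).differentiableAt one_ne_zero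
  have pd_pd (k l : Fin 2) :
      pd k (pd l f) u = fderiv ℝ (fderiv ℝ f) u (Pi.single k 1) (Pi.single l 1) := by
    change fderiv ℝ (fun v => fderiv ℝ f v (Pi.single l 1)) u (Pi.single k 1) = _
    simp [fderiv_clm_apply hf' (differentiableAt_const _)]
  rw [pd_pd, pd_pd]
  exact hf.isSymmSndFDerivAt (by simp) _ _

theorem dot3_pd_gaussMap (x : Param → Vec3) (u : Param) (j : Fin 2) :
    dot3 (pd j x u) (gaussMap x u) = 0 := by
  rw [gaussMap, dot3_eq_dotProduct, dotProduct_smul]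
  fin_cases j <;> simp

theorem differentiableAt_gaussMap {x : Param → Vec3} {u : Param} (hx : ContDiffAt ℝ 2 x u)
    (himm : LinearIndependent ℝ ![pd 0 x u, pd 1 x u]) :
    DifferentiableAt ℝ (gaussMap x) u := by
  have hpd (i : Fin 2) : DifferentiableAt ℝ (pd i x) u :=
    (contDiffAt_pd (m := 1) hx (by norm_num) i).differentiableAt one_ne_zero
  have hcross : DifferentiableAt ℝ (fun v => crossProduct (pd 0 x v) (pd 1 x v)) u :=
    differentiableAt_bilin_apply₂ crossProduct (hpd 0) (hpd 1)
  have hpos : 0 < dot3 (crossProduct (pd 0 x u) (pd 1 x u)) (crossProduct (pd 0 x u) (pd 1 x u)) :=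
    dot3_self_pos (crossProduct_ne_zero_iff_linearIndependent.2 himm)
  have hnorm : DifferentiableAt ℝ (fun v => norm3 (crossProduct (pd 0 x v) (pd 1 x v))) u :=
    (differentiableAt_dot3 hcross hcross).sqrt hpos.ne'
  exact (hnorm.inv (Real.sqrt_pos.2 hpos).ne').smul hcross

theorem isSymm_fformII {x : Param → Vec3} {u : Param} (hx : ContDiffAt ℝ 2 x u) :
    (fformII x u).IsSymm :=
  Matrix.IsSymm.ext fun i j => congrArg (dot3 · (gaussMap x u)) (pd_comm hx j i)

theorem differentiableAt_fformII_apply {x : Param → Vec3} {u : Param} (hx : ContDiffAt ℝ 3 x u)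
    (himm : LinearIndependent ℝ ![pd 0 x u, pd 1 x u]) (i j : Fin 2) :
    DifferentiableAt ℝ (fun v => fformII x v i j) u := by
  have hpd : ContDiffAt ℝ 2 (pd j x) u := contDiffAt_pd hx (by norm_num) j
  have hpd₂ : ContDiffAt ℝ 1 (pd i (pd j x)) u := contDiffAt_pd hpd (by norm_num) i
  exact differentiableAt_dot3 (hpd₂.differentiableAt one_ne_zero)
    (differentiableAt_gaussMap (hx.of_le (by norm_num)) himm)

theorem dot3_beltrami2_of_orthogonal {a : Param → Matrix (Fin 2) (Fin 2) ℝ} {f : Param → Vec3}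
    {u : Param} {w : Vec3} (ha : ∀ i j, DifferentiableAt ℝ (fun v => a v i j) u)
    (hdet : (a u).det ≠ 0) (hf : ∀ j, DifferentiableAt ℝ (pd j f) u)
    (hw : ∀ j, dot3 (pd j f u) w = 0) :
    dot3 (beltrami2 a f u) w = -∑ i, ∑ j, (a u)⁻¹ i j * dot3 (pd i (pd j f) u) w := by
  have hsqrt : DifferentiableAt ℝ (fun v => √|(a v).det|) u :=
    ((differentiableAt_matrix_det ha).abs hdet).sqrt (abs_ne_zero.2 hdet)
  have hsqrt_ne : √|(a u).det| ≠ 0 := (Real.sqrt_pos.2 (abs_pos.2 hdet)).ne'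
  have hterm (i j : Fin 2) :
      pd i (fun v => (√|(a v).det| * (a v)⁻¹ i j) • pd j f v) u ⬝ᵥ w =
        √|(a u).det| * ((a u)⁻¹ i j * (pd i (pd j f) u ⬝ᵥ w)) := by
    have hwj : pd j f u ⬝ᵥ w = 0 := hw j
    rw [pd_smul i (hsqrt.fun_mul (differentiableAt_matrix_inv_apply ha hdet i j)) (hf j),
      add_dotProduct, smul_dotProduct, smul_dotProduct, hwj, smul_zero, add_zero, smul_eq_mul,
      mul_assoc]
  simp only [dot3_eq_dotProduct, beltrami2, neg_dotProduct, smul_dotProduct, sum_dotProduct,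
    hterm, ← Finset.mul_sum, smul_eq_mul, inv_mul_cancel_left₀ hsqrt_ne]

theorem dot3_beltrami2_fformII_gaussMap {x : Param → Vec3} {u : Param} (hx : ContDiffAt ℝ 3 x u)
    (himm : LinearIndependent ℝ ![pd 0 x u, pd 1 x u]) (hdet : (fformII x u).det ≠ 0) :
    dot3 (beltrami2 (fformII x) x u) (gaussMap x u) = -2 := by
  have hpd (j : Fin 2) : DifferentiableAt ℝ (pd j x) u :=
    (contDiffAt_pd (m := 2) hx (by norm_num) j).differentiableAt two_ne_zero
  calc dot3 (beltrami2 (fformII x) x u) (gaussMap x u)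
    _ = -∑ i, ∑ j, (fformII x u)⁻¹ i j * fformII x u i j :=
      dot3_beltrami2_of_orthogonal (differentiableAt_fformII_apply hx himm) hdet hpd
        (dot3_pd_gaussMap x u)
    _ = -2 := by
      rw [sum_inv_mul_self_of_isSymm (isSymm_fformII (hx.of_le (by norm_num))) hdet,
        Fintype.card_fin, Nat.cast_ofNat]

theorem stmt10_general {x : Param → Vec3} {u : Param} (hx : ContDiffAt ℝ 3 x u)
    (himm : LinearIndependent ℝ ![pd 0 x u, pd 1 x u]) (hdet : (fformII x u).det ≠ 0)
    {lam : ℝ} (heig : beltrami2 (fformII x) x u = lam • x u) :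
    dot3 (x u) (gaussMap x u) = -2 / lam := by
  have hmul : lam * dot3 (x u) (gaussMap x u) = -2 := by
    rw [← dot3_beltrami2_fformII_gaussMap hx himm hdet, heig]
    exact (smul_dotProduct lam (x u) (gaussMap x u)).symm
  have hlam : lam ≠ 0 := by
    rintro rfl
    simp at hmul
  rwa [eq_div_iff hlam, mul_comm]

/-- if `Δ^{II} x = λ x` on `U` with `λ ≠ 0`, then `⟨x, n⟩ = −2/λ` on `U`. -/
theorem stmt10 (U : Set Param) (x : Param → Vec3)
    (hU : IsOpen U) (hUconn : IsConnected U)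
    (hx : ContDiffOn ℝ (⊤ : ℕ∞) x U) (himm : Immersed x U)
    (hell : ∀ u ∈ U, (fformII x u).PosDef)
    (lam : ℝ) (hlam : lam ≠ 0)
    (heig : ∀ u ∈ U, beltrami2 (fformII x) x u = lam • x u) :
    ∀ u ∈ U, dot3 (x u) (gaussMap x u) = -2 / lam := by
  intro u hu
  have hx₃ : ContDiffAt ℝ 3 x u := (contDiffOn_infty.1 hx 3).contDiffAt (hU.mem_nhds hu)
  exact stmt10_general hx₃ (himm u hu) (hell u hu).det_pos.ne' (heig u hu)
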